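/- Suppose in addition that det ∇²Θ ≠ 0 on Ω, and let (μ, c, λ) : ℝ² → Ω (with variables (X, T)) be a continuously differentiable map satisfying the modulated equations in parameter form: (∂_T + c ∂_X)(∇Θ ∘ (μ, c, λ)) = (∂_μΘ ∘ (μ, c, λ)) · 𝕊' · ∂_X (μ, c, λ), where 𝕊' is the (N+2)×(N+2) block matrix [[0, 1, 0],[1, 0, 0],[0, 0, −B]]. Then the fields k, α, M obtained by composing with (μ, c, λ) satisfy the conservation laws ∂_T k = −∂_X (k c), ∂_T α = ∂_X ((Θ ∘ (μ, c, λ)) − α c), and ∂_T M = −∂_X (c M + B λ). -/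

import Mathlib

open Matrix

noncomputable section

/-- The state space `ℝ × ℝ × ℝ^N` with coordinates `(μ, c, λ)`
(respectively `(k, α, M)`). -/
abbrev E (N : ℕ) : Type := ℝ × ℝ × (Fin N → ℝ)

/-- Index type for `(N+2) × (N+2)` matrices in `1 + 1 + N` block form. -/
abbrev Idx (N : ℕ) : Type := Fin 1 ⊕ Fin 1 ⊕ Fin N

/-- The standard basis of `ℝ × ℝ × ℝ^N`. -/
def basisVec (N : ℕ) : Idx N → E N :=
  Sum.elim (fun _ => (1, 0, 0))
    (Sum.elim (fun _ => (0, 1, 0)) (fun i => (0, 0, Pi.single i 1)))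

/-- The impulse `Q(M) = (1/2) M · B⁻¹ M`. -/
def Qimp (N : ℕ) (B : Matrix (Fin N) (Fin N) ℝ) (M : Fin N → ℝ) : ℝ :=
  (1/2) * (M ⬝ᵥ B⁻¹.mulVec M)

/-- Partial derivative `∂_μΘ`. -/
def dmu (N : ℕ) (Θ : E N → ℝ) (p : E N) : ℝ := fderiv ℝ Θ p (1, 0, 0)

/-- Partial derivative `∂_cΘ`. -/
def dc (N : ℕ) (Θ : E N → ℝ) (p : E N) : ℝ := fderiv ℝ Θ p (0, 1, 0)

/-- Gradient `∇_λΘ` in the `λ` variables. -/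
def gradlam (N : ℕ) (Θ : E N → ℝ) (p : E N) : Fin N → ℝ :=
  fun i => fderiv ℝ Θ p (0, 0, Pi.single i 1)

/-- Hessian matrix of a function on `ℝ × ℝ × ℝ^N` in the standard basis. -/
def hessMat (N : ℕ) (Θ : E N → ℝ) (p : E N) : Matrix (Idx N) (Idx N) ℝ :=
  Matrix.of fun i j =>
    fderiv ℝ (fun q => fderiv ℝ Θ q (basisVec N j)) p (basisVec N i)

/-- The wavenumber `k = 1/∂_μΘ`. -/
def kfun (N : ℕ) (Θ : E N → ℝ) (p : E N) : ℝ := 1 / dmu N Θ p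

/-- The mean value `M = ∇_λΘ/∂_μΘ`. -/
def Mfun (N : ℕ) (Θ : E N → ℝ) (p : E N) : Fin N → ℝ :=
  (dmu N Θ p)⁻¹ • gradlam N Θ p

/-- The variable `α = ∂_cΘ − ∂_μΘ · Q(∇_λΘ/∂_μΘ)`. -/
def afun (N : ℕ) (B : Matrix (Fin N) (Fin N) ℝ) (Θ : E N → ℝ) (p : E N) : ℝ :=
  dc N Θ p - dmu N Θ p * Qimp N B (Mfun N Θ p)

/-- The map `Φ = (k, α, M)`. -/
def Phi (N : ℕ) (B : Matrix (Fin N) (Fin N) ℝ) (Θ : E N → ℝ) (p : E N) : E N :=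
  (kfun N Θ p, afun N B Θ p, Mfun N Θ p)

/-- `Φ` is a local diffeomorphism at `p`: it is smooth and injective on an open
neighborhood of `p`, its image is open, and it admits a smooth local inverse. -/
def IsLocalDiffeoAt (N : ℕ) (Φ : E N → E N) (p : E N) : Prop :=
  ∃ s : Set (E N), IsOpen s ∧ p ∈ s ∧ ContDiffOn ℝ (⊤ : ℕ∞) Φ s ∧ Set.InjOn Φ s ∧
    IsOpen (Φ '' s) ∧ ∃ Ψ : E N → E N, (∀ x ∈ s, Ψ (Φ x) = x) ∧
      ContDiffOn ℝ (⊤ : ℕ∞) Ψ (Φ '' s)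

end

noncomputable section

/-- The full gradient `∇Θ = (∂_μΘ, ∂_cΘ, ∇_λΘ)`. -/
def gradTheta (N : ℕ) (Θ : E N → ℝ) (p : E N) : E N :=
  (dmu N Θ p, dc N Θ p, gradlam N Θ p)

/-- The matrix `𝕊' = [[0,1,0],[1,0,0],[0,0,−B]]` acting on `ℝ × ℝ × ℝ^N`. -/
def Sprime (N : ℕ) (B : Matrix (Fin N) (Fin N) ℝ) (q : E N) : E N :=
  (q.2.1, q.1, -(B.mulVec q.2.2))

end

/-- Chain rule for the gradient of `Θ` along a curve. -/
theorem gradTheta_curve (N : ℕ) (Ω : Set (E N)) (hΩ : IsOpen Ω)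
    (Θ : E N → ℝ) (hΘ : ContDiffOn ℝ (⊤ : ℕ∞) Θ Ω) (p : ℝ → E N) (s : ℝ)
    (hp : DifferentiableAt ℝ p s) (hm : p s ∈ Ω) :
    DifferentiableAt ℝ (fun t => gradTheta N Θ (p t)) s := by
  have h1 : ContDiffAt ℝ (⊤ : ℕ∞) Θ (p s) := hΘ.contDiffAt (hΩ.mem_nhds hm)
  have h2 : DifferentiableAt ℝ (fderiv ℝ Θ) (p s) :=
    (h1.fderiv_right (m := 1) (by norm_cast)).differentiableAt (by norm_num)
  have h3 : DifferentiableAt ℝ (fun t => fderiv ℝ Θ (p t)) s := h2.comp s hp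
  have h4 : ∀ v : E N, DifferentiableAt ℝ (fun t => fderiv ℝ Θ (p t) v) s :=
    fun v => h3.clm_apply (differentiableAt_const v)
  exact (h4 _).prodMk ((h4 _).prodMk (differentiableAt_pi.2 fun i => h4 _))

/-- The derivative of `Θ` expressed through its gradient. -/
theorem fderiv_eq_grad (N : ℕ) (Θ : E N → ℝ) (p v : E N) :
    fderiv ℝ Θ p v = dmu N Θ p * v.1 + dc N Θ p * v.2.1 + gradlam N Θ p ⬝ᵥ v.2.2 := by
  have hv : v = v.1 • ((1, 0, 0) : E N) + v.2.1 • ((0, 1, 0) : E N)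
      + ∑ i, v.2.2 i • ((0, 0, Pi.single i 1) : E N) := by
    refine Prod.ext ?_ (Prod.ext ?_ ?_)
    · simp [Prod.fst_sum]
    · simp [Prod.fst_sum, Prod.snd_sum]
    · ext j
      simp [Prod.snd_sum, Finset.sum_apply, Pi.single_apply]
  conv_lhs => rw [hv]
  simp only [map_add, map_sum, map_smul, dmu, dc, gradlam, dotProduct, smul_eq_mul]
  congr 1
  · ring
  · exact Finset.sum_congr rfl fun i _ => mul_comm _ _

/-- Derivative of a matrix-vector product. -/
theorem hasDerivAt_mulVec {N : ℕ} (A : Matrix (Fin N) (Fin N) ℝ) {m : ℝ → Fin N → ℝ}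
    {m' : Fin N → ℝ} {s : ℝ} (hm : HasDerivAt m m' s) :
    HasDerivAt (fun t => A.mulVec (m t)) (A.mulVec m') s := by
  rw [hasDerivAt_pi] at hm ⊢
  intro i
  simp only [Matrix.mulVec, dotProduct]
  exact HasDerivAt.fun_sum fun j _ => (hm j).const_mul (A i j)

/-- Derivative of the impulse along a curve. -/
theorem hasDerivAt_Qimp {N : ℕ} (B : Matrix (Fin N) (Fin N) ℝ) (hB : B.IsSymm)
    {m : ℝ → Fin N → ℝ} {m' : Fin N → ℝ} {s : ℝ} (hm : HasDerivAt m m' s) :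
    HasDerivAt (fun t => Qimp N B (m t)) (m s ⬝ᵥ B⁻¹.mulVec m') s := by
  have h1 := hasDerivAt_pi.1 hm
  have h2 := hasDerivAt_pi.1 (hasDerivAt_mulVec B⁻¹ hm)
  have h3 : HasDerivAt (fun t => Qimp N B (m t))
      ((1/2) * ∑ i, (m' i * (B⁻¹.mulVec (m s)) i + m s i * (B⁻¹.mulVec m') i)) s :=
    (HasDerivAt.fun_sum fun i _ => (h1 i).mul (h2 i)).const_mul (1/2 : ℝ)
  convert h3 using 1
  have hs : m' ⬝ᵥ B⁻¹.mulVec (m s) = m s ⬝ᵥ B⁻¹.mulVec m' := by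
    have ht : (B⁻¹)ᵀ = B⁻¹ := by rw [Matrix.transpose_nonsing_inv, hB.eq]
    rw [Matrix.dotProduct_mulVec, ← Matrix.mulVec_transpose, ht, dotProduct_comm]
  rw [Finset.sum_add_distrib]
  change _ = (1/2) * (m' ⬝ᵥ B⁻¹.mulVec (m s) + m s ⬝ᵥ B⁻¹.mulVec m')
  rw [hs]; ring

/-- Derivatives of `k`, `M`, `α` along a curve. -/
theorem fields_curve (N : ℕ) (B : Matrix (Fin N) (Fin N) ℝ) (hB : B.IsSymm)
    (Θ : E N → ℝ) (p : ℝ → E N) (s : ℝ) (G : E N)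
    (hG : HasDerivAt (fun t => gradTheta N Θ (p t)) G s) (ha : dmu N Θ (p s) ≠ 0) :
    HasDerivAt (fun t => kfun N Θ (p t)) (-G.1 / dmu N Θ (p s) ^ 2) s ∧
    ∃ m' : Fin N → ℝ, m' = (dmu N Θ (p s))⁻¹ • G.2.2
        + (-G.1 / dmu N Θ (p s) ^ 2) • gradlam N Θ (p s) ∧
      HasDerivAt (fun t => Mfun N Θ (p t)) m' s ∧
      HasDerivAt (fun t => afun N B Θ (p t))
        (G.2.1 - (G.1 * Qimp N B (Mfun N Θ (p s))
          + dmu N Θ (p s) * (Mfun N Θ (p s) ⬝ᵥ B⁻¹.mulVec m'))) s := by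
  have h1 : HasDerivAt (fun t => dmu N Θ (p t)) G.1 s := hG.fst
  have h2 : HasDerivAt (fun t => dc N Θ (p t)) G.2.1 s := hG.snd.fst
  have h3 : HasDerivAt (fun t => gradlam N Θ (p t)) G.2.2 s := hG.snd.snd
  have hi := h1.fun_inv ha
  have hM : HasDerivAt (fun t => Mfun N Θ (p t)) _ s := hi.fun_smul h3
  refine ⟨?_, _, rfl, hM, ?_⟩
  · simpa only [kfun, one_div] using hi
  · exact h2.sub (h1.mul (hasDerivAt_Qimp B hB hM))

/-- if `det ∇²Θ ≠ 0` on `Ω` and `(μ,c,λ) : ℝ² → Ω` is a `C¹` solution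
of the modulated equations in parameter form
`(∂_T + c ∂_X)(∇Θ ∘ (μ,c,λ)) = (∂_μΘ ∘ (μ,c,λ)) 𝕊' ∂_X(μ,c,λ)`,
then the fields `k, α, M` satisfy the conservation laws
`∂_T k = −∂_X(k c)`, `∂_T α = ∂_X(Θ − α c)`, `∂_T M = −∂_X(c M + B λ)`. -/
theorem stmt7 (N : ℕ) (hN : 1 ≤ N) (B : Matrix (Fin N) (Fin N) ℝ)
    (hBsymm : B.IsSymm) (hBinv : IsUnit B.det)
    (Ω : Set (E N)) (hΩ : IsOpen Ω)
    (Θ : E N → ℝ) (hΘ : ContDiffOn ℝ (⊤ : ℕ∞) Θ Ω)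
    (hμpos : ∀ p ∈ Ω, 0 < dmu N Θ p)
    (hdet : ∀ p ∈ Ω, (hessMat N Θ p).det ≠ 0)
    (P : ℝ × ℝ → E N) (hP : ContDiff ℝ 1 P) (hmem : ∀ q : ℝ × ℝ, P q ∈ Ω)
    (heq : ∀ X T : ℝ,
      deriv (fun t => gradTheta N Θ (P (X, t))) T
        + (P (X, T)).2.1 • deriv (fun x => gradTheta N Θ (P (x, T))) X
      = dmu N Θ (P (X, T)) • Sprime N B (deriv (fun x => P (x, T)) X)) :
    ∀ X T : ℝ,
      deriv (fun t => kfun N Θ (P (X, t))) T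
        = -deriv (fun x => kfun N Θ (P (x, T)) * (P (x, T)).2.1) X ∧
      deriv (fun t => afun N B Θ (P (X, t))) T
        = deriv (fun x => Θ (P (x, T)) - afun N B Θ (P (x, T)) * (P (x, T)).2.1) X ∧
      deriv (fun t => Mfun N Θ (P (X, t))) T
        = -deriv (fun x =>
            (P (x, T)).2.1 • Mfun N Θ (P (x, T)) + B.mulVec (P (x, T)).2.2) X := by
  intro X T
  have hPd : Differentiable ℝ P := hP.differentiable (by norm_num)
  have hx : DifferentiableAt ℝ (fun x => P (x, T)) X :=
    (hPd (X, T)).comp X (by fun_prop : DifferentiableAt ℝ (fun x : ℝ => (x, T)) X)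
  have ht : DifferentiableAt ℝ (fun t => P (X, t)) T :=
    (hPd (X, T)).comp T (by fun_prop : DifferentiableAt ℝ (fun t : ℝ => (X, t)) T)
  have hGx := (gradTheta_curve N Ω hΩ Θ hΘ _ X hx (hmem _)).hasDerivAt
  have hGt := (gradTheta_curve N Ω hΩ Θ hΘ _ T ht (hmem _)).hasDerivAt
  have hxd := hx.hasDerivAt
  have h := heq X T
  have ha : dmu N Θ (P (X, T)) ≠ 0 := (hμpos _ (hmem _)).ne'
  have hΘx : HasDerivAt (fun x => Θ (P (x, T))) _ X :=
    HasFDerivAt.comp_hasDerivAt X (f := fun x => P (x, T))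
      ((hΘ.contDiffAt (hΩ.mem_nhds (hmem (X, T)))).differentiableAt
        (by simp)).hasFDerivAt hxd
  generalize deriv (fun x => gradTheta N Θ (P (x, T))) X = Gx at *
  generalize deriv (fun t => gradTheta N Θ (P (X, t))) T = Gt at *
  generalize deriv (fun x => P (x, T)) X = V at *
  rw [fderiv_eq_grad] at hΘx
  obtain ⟨kx, mx, hmx, Mx, ax⟩ := fields_curve N B hBsymm Θ (fun x => P (x, T)) X Gx hGx ha
  obtain ⟨kt, mt, hmt, Mt, at'⟩ := fields_curve N B hBsymm Θ (fun t => P (X, t)) T Gt hGt ha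
  have hc : HasDerivAt (fun x => (P (x, T)).2.1) V.2.1 X := hxd.snd.fst
  have hl : HasDerivAt (fun x => (P (x, T)).2.2) V.2.2 X := hxd.snd.snd
  have e1 : Gt.1 = dmu N Θ (P (X, T)) * V.2.1 - (P (X, T)).2.1 * Gx.1 := by
    have := congrArg Prod.fst h
    simp [Sprime] at this
    linarith
  have e2 : Gt.2.1 = dmu N Θ (P (X, T)) * V.1 - (P (X, T)).2.1 * Gx.2.1 := by
    have := congrArg (fun z => z.2.1) h
    simp [Sprime] at this
    linarith
  have e3 : Gt.2.2 = -(dmu N Θ (P (X, T)) • B.mulVec V.2.2) - (P (X, T)).2.1 • Gx.2.2 := by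
    have := congrArg (fun z => z.2.2) h
    simp [Sprime] at this
    rw [← this]; abel
  have hgM : gradlam N Θ (P (X, T)) = dmu N Θ (P (X, T)) • Mfun N Θ (P (X, T)) := by
    rw [Mfun, smul_smul, mul_inv_cancel₀ ha, one_smul]
  have em : mt = -(V.2.1 • Mfun N Θ (P (X, T)) + (P (X, T)).2.1 • mx + B.mulVec V.2.2) := by
    rw [hmt, hmx, e1, e3, hgM]
    ext i
    simp only [Pi.add_apply, Pi.smul_apply, Pi.neg_apply, Pi.sub_apply, smul_eq_mul]
    field_simp
    ring
  refine ⟨?_, ?_, ?_⟩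
  · rw [kt.deriv, (kx.fun_mul hc).deriv, e1, kfun]
    field_simp
    ring
  · rw [at'.deriv, (hΘx.fun_sub (ax.fun_mul hc)).deriv, em, e1, e2, hgM, afun]
    have hBB : B⁻¹.mulVec (B.mulVec V.2.2) = V.2.2 := by
      rw [Matrix.mulVec_mulVec, Matrix.nonsing_inv_mul _ hBinv, Matrix.one_mulVec]
    have hQ : Mfun N Θ (P (X, T)) ⬝ᵥ B⁻¹.mulVec (Mfun N Θ (P (X, T)))
        = 2 * Qimp N B (Mfun N Θ (P (X, T))) := by
      rw [Qimp]; ring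
    simp only [Matrix.mulVec_neg, Matrix.mulVec_add, Matrix.mulVec_smul, dotProduct_neg,
      dotProduct_add, dotProduct_smul, smul_dotProduct, smul_eq_mul, hBB, hQ]
    ring
  · rw [Mt.deriv, ((hc.fun_smul Mx).fun_add (hasDerivAt_mulVec B hl)).deriv, em]
    congr 2
    abel
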